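/- arXiv:math/0504070 — 3 statements merged into one kernel-verified Lean document; each statement's English description precedes it below -/
import Mathlib

section
/- Let K be a field of characteristic ≠ 2, let t ∈ K, and let x, y ∈ K with x ≠ 0 satisfy y² = x(x − (t−1)²)(x − (t+1)²). Then X := (x + (t²−1))²/(4x) and Y := y(x² − (t²−1)²)/(8x²) satisfy Y² = X(X − (t²−1))(X − t²). (This is the explicit generically 2:1 rational isogeny φ from the elliptic fibration S₂ with Weierstrass equation y² = x(x−(t−1)²)(x−(t+1)²) to the elliptic fibration S₁ with Weierstrass equation y² = x(x−(t²−1))(x−t²).) -/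
/-!
Put `X = (x + (t² - 1))² / (4x)`. Two of the three factors on the right are squares up to `x`, and
the third is supplied by the equation of the source curve:
`X - (t² - 1) = (x - (t² - 1))² / (4x)`, and
`X - t² = (x - (t - 1)²) (x - (t + 1)²) / (4x) = y² / (4x²)`.
Multiplying gives `y² (x² - (t² - 1)²)² / (64 x⁴)`, which is the left-hand side.
-/

/-- The explicit generically 2:1 rational isogeny φ from the elliptic fibration S₂ with
Weierstrass equation `y² = x(x−(t−1)²)(x−(t+1)²)` to the elliptic fibration S₁ with
Weierstrass equation `y² = x(x−(t²−1))(x−t²)`. -/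
theorem stmt13 {K : Type*} [Field K] (h2 : ringChar K ≠ 2) (t x y : K) (hx : x ≠ 0)
    (h : y^2 = x * (x - (t-1)^2) * (x - (t+1)^2)) :
    (y * (x^2 - (t^2-1)^2) / (8*x^2))^2 =
      ((x + (t^2-1))^2 / (4*x)) *
        ((x + (t^2-1))^2 / (4*x) - (t^2-1)) *
        ((x + (t^2-1))^2 / (4*x) - t^2) := by
  have two_ne : (2 : K) ≠ 0 := Ring.two_ne_zero h2
  have four_ne : (4 : K) ≠ 0 := by
    rw [show (4 : K) = 2 * 2 by norm_num]
    exact mul_ne_zero two_ne two_ne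
  have eight_ne : (8 : K) ≠ 0 := by
    rw [show (8 : K) = 2 * 4 by norm_num]
    exact mul_ne_zero two_ne four_ne
  have factor₁ : (x + (t^2-1))^2 / (4*x) - (t^2-1) = (x - (t^2-1))^2 / (4*x) := by
    field_simp
    ring
  have factor₂ : (x + (t^2-1))^2 / (4*x) - t^2 = y^2 / (4*x^2) := by
    rw [h]
    field_simp
    ring
  rw [factor₁, factor₂]
  field_simp
  ring
end

section
/- Let K be a field, let t ∈ K, and let x, y ∈ K with x ≠ 0 satisfy y² = x(x − (t²−1))(x − t²). Then X := x + t²(t²−1)/x and Y := y(1 − t²(t²−1)/x²) satisfy Y² = (X + 1 − 2t²)(X² − 4t²(t²−1)). (This is the explicit generically 2:1 rational isogeny between the elliptic fibration S₁ and the extremal elliptic fibration X₁₁₂₈ with singular fibers I₁, I₁, I₂, I₈ and congruence group Γ₀(8) ∩ Γ₁(4).) -/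
/-- The explicit generically 2:1 rational isogeny between the elliptic fibration S₁ and
the extremal elliptic fibration X₁₁₂₈ with singular fibers I₁, I₁, I₂, I₈ and
congruence group Γ₀(8) ∩ Γ₁(4). -/
theorem stmt14 {K : Type*} [Field K] (t x y : K) (hx : x ≠ 0)
    (h : y^2 = x * (x - (t^2-1)) * (x - t^2)) :
    (y * (1 - t^2*(t^2-1)/x^2))^2 =
      ((x + t^2*(t^2-1)/x) + 1 - 2*t^2) *
        ((x + t^2*(t^2-1)/x)^2 - 4*t^2*(t^2-1)) := by
  -- With `b = t²(t²-1)` and `X = x + b/x`, the curve reads `y² = x² (X + 1 - 2t²)`,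
  -- while `x² (1 - b/x²)² = (x - b/x)² = X² - 4b`.
  rw [mul_pow, h]
  field_simp
  ring
end

section
/- Let K be a field of characteristic ≠ 2 and let x₀, x₁, x₂, x₃, y₀, y₁, y₂, y₃ ∈ K satisfy 2y₀² = x₀²−x₁²−x₂²−x₃², 2y₁² = −x₀²+x₁²−x₂²−x₃², 2y₂² = −x₀²−x₁²+x₂²−x₃², 2y₃² = −x₀²−x₁²−x₂²+x₃², and assume s := x₀²+x₁²+x₂²+x₃² ≠ 0. Then y_i² − x_i² = −s/2 ≠ 0 for each i (so y_i ± x_i ≠ 0), and the elements x = (y₀+x₀)/(y₀−x₀), y = (y₁+x₁)/(y₁−x₁), z = (y₂+x₂)/(y₂−x₂), t = (y₃+x₃)/(y₃−x₃) satisfy the Fermi equation x + 1/x + y + 1/y + z + 1/z + t + 1/t = 0. (This is Stienstra's 8:1 rational map giving the correspondence T₃₂ → T₇₀ from the Nygaard–van Geemen threefold to the Fermi threefold.) -/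
/-!
Subtracting `2 xᵢ²` from the `i`-th quadric gives `2 (yᵢ² - xᵢ²) = -s`, so these differences share the
nonzero value `c = -s/2`. For `w = (y + x)/(y - x)` one has `w + 1/w = 2 (y² + x²)/(y² - x²)`
(`add_one_div_of_sq_sub_sq`), so over the common denominator `c` the Fermi sum becomes
`2 (∑ yᵢ² + ∑ xᵢ²)/c`, and adding the four quadrics shows `∑ yᵢ² = -s = -∑ xᵢ²`.
-/

theorem add_one_div_of_sq_sub_sq {K : Type*} [Field K] {x y c : K}
    (h : y^2 - x^2 = c) (hc : c ≠ 0) :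
    (y+x)/(y-x) + 1/((y+x)/(y-x)) = 2*(y^2 + x^2)/c := by
  have hprod : (y+x)*(y-x) ≠ 0 := by
    rw [← sq_sub_sq, h]
    exact hc
  have hp : y+x ≠ 0 := left_ne_zero_of_mul hprod
  have hm : y-x ≠ 0 := right_ne_zero_of_mul hprod
  rw [← h, sq_sub_sq]
  field_simp
  ring

/-- Stienstra's 8:1 rational map giving the correspondence `T₃₂ → T₇₀` from the
Nygaard–van Geemen threefold to the Fermi threefold. -/
theorem stmt16 {K : Type*} [Field K] (h2 : ringChar K ≠ 2)
    (x₀ x₁ x₂ x₃ y₀ y₁ y₂ y₃ s : K)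
    (h0 : 2*y₀^2 =  x₀^2 - x₁^2 - x₂^2 - x₃^2)
    (h1 : 2*y₁^2 = -x₀^2 + x₁^2 - x₂^2 - x₃^2)
    (h2' : 2*y₂^2 = -x₀^2 - x₁^2 + x₂^2 - x₃^2)
    (h3 : 2*y₃^2 = -x₀^2 - x₁^2 - x₂^2 + x₃^2)
    (hs : s = x₀^2 + x₁^2 + x₂^2 + x₃^2) (hsne : s ≠ 0) :
    (y₀^2 - x₀^2 = -s/2 ∧ y₁^2 - x₁^2 = -s/2 ∧
     y₂^2 - x₂^2 = -s/2 ∧ y₃^2 - x₃^2 = -s/2) ∧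
    -s/2 ≠ 0 ∧
    ((y₀+x₀)/(y₀-x₀) + 1/((y₀+x₀)/(y₀-x₀)) +
     (y₁+x₁)/(y₁-x₁) + 1/((y₁+x₁)/(y₁-x₁)) +
     (y₂+x₂)/(y₂-x₂) + 1/((y₂+x₂)/(y₂-x₂)) +
     (y₃+x₃)/(y₃-x₃) + 1/((y₃+x₃)/(y₃-x₃)) = 0) := by
  have two : (2 : K) ≠ 0 := Ring.two_ne_zero h2
  have e0 : y₀^2 - x₀^2 = -s/2 := by
    rw [eq_div_iff two]; linear_combination h0 + hs
  have e1 : y₁^2 - x₁^2 = -s/2 := by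
    rw [eq_div_iff two]; linear_combination h1 + hs
  have e2 : y₂^2 - x₂^2 = -s/2 := by
    rw [eq_div_iff two]; linear_combination h2' + hs
  have e3 : y₃^2 - x₃^2 = -s/2 := by
    rw [eq_div_iff two]; linear_combination h3 + hs
  have hc : -s/2 ≠ 0 := div_ne_zero (neg_ne_zero.mpr hsne) two
  refine ⟨⟨e0, e1, e2, e3⟩, hc, ?_⟩
  have hsum : 2*(y₀^2 + x₀^2) + 2*(y₁^2 + x₁^2) + 2*(y₂^2 + x₂^2) + 2*(y₃^2 + x₃^2) = 0 := by
    linear_combination h0 + h1 + h2' + h3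
  have f0 := add_one_div_of_sq_sub_sq e0 hc
  have f1 := add_one_div_of_sq_sub_sq e1 hc
  have f2 := add_one_div_of_sq_sub_sq e2 hc
  have f3 := add_one_div_of_sq_sub_sq e3 hc
  have hfrac : 2*(y₀^2 + x₀^2)/(-s/2) + 2*(y₁^2 + x₁^2)/(-s/2) + 2*(y₂^2 + x₂^2)/(-s/2) +
      2*(y₃^2 + x₃^2)/(-s/2) = 0 := by
    rw [← add_div, ← add_div, ← add_div, hsum, zero_div]
  rw [← f0, ← f1, ← f2, ← f3] at hfrac
  simpa only [add_assoc] using hfrac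
end
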